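/- For every mixed instance on a simple graph, an EFX^+_- allocation always exists. -/

import Mathlib

open Finset

variable {V : Type*} [DecidableEq V]

/-- `e` has strictly positive marginal value (is a *good*) for the valuation `v`
relative to the item set `M`. -/
def IsGoodFor (v : Finset (Sym2 V) → ℝ) (M : Finset (Sym2 V)) (e : Sym2 V) : Prop :=
  ∀ S ⊆ M.erase e, v S < v (insert e S)

/-- `e` has strictly negative marginal value (is a *chore*) for the valuation `v`
relative to the item set `M`. -/
def IsChoreFor (v : Finset (Sym2 V) → ℝ) (M : Finset (Sym2 V)) (e : Sym2 V) : Prop :=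
  ∀ S ⊆ M.erase e, v (insert e S) < v S

/-- `e` has zero marginal value (is a *dummy*) for the valuation `v`
relative to the item set `M`. -/
def IsDummyFor (v : Finset (Sym2 V) → ℝ) (M : Finset (Sym2 V)) (e : Sym2 V) : Prop :=
  ∀ S ⊆ M.erase e, v (insert e S) = v S

/-- A valid instance on a simple graph: the edge set `M` consists of non-loop edges,
every edge is (for every agent) a good, a chore, or a dummy, and every edge not
incident to an agent is a dummy for that agent. -/
def ValidInstance (M : Finset (Sym2 V)) (v : V → Finset (Sym2 V) → ℝ) : Prop :=
  (∀ e ∈ M, ¬ e.IsDiag) ∧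
  (∀ (i : V), ∀ e ∈ M, IsGoodFor (v i) M e ∨ IsChoreFor (v i) M e ∨ IsDummyFor (v i) M e) ∧
  (∀ (i : V), ∀ e ∈ M, i ∉ e → IsDummyFor (v i) M e)

/-- `X` is a (complete) allocation of the items in `M`: bundles are contained in `M`
and every item belongs to exactly one bundle. -/
def IsAllocation (M : Finset (Sym2 V)) (X : V → Finset (Sym2 V)) : Prop :=
  (∀ i, X i ⊆ M) ∧ ∀ e ∈ M, ∃! i, e ∈ X i

/-- Every allocated edge goes to one of its endpoint agents. -/
def IsOrientation (X : V → Finset (Sym2 V)) : Prop :=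
  ∀ i, ∀ e ∈ X i, i ∈ e

/-- Agent `i` envies agent `j`. -/
def Envies (v : V → Finset (Sym2 V) → ℝ) (X : V → Finset (Sym2 V)) (i j : V) : Prop :=
  v i (X i) < v i (X j)

/-- EFX condition on the envied bundle, removing an item whose removal *strictly*
decreases the value (superscript `+`). -/
def CondEnviedStrict (v : V → Finset (Sym2 V) → ℝ) (X : V → Finset (Sym2 V)) : Prop :=
  ∀ i j, Envies v X i j → ∀ e ∈ X j,
    v i ((X j).erase e) < v i (X j) → v i ((X j).erase e) ≤ v i (X i)

/-- EFX condition on the envied bundle, removing an item whose removal weakly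
decreases the value (superscript `0`). -/
def CondEnviedWeak (v : V → Finset (Sym2 V) → ℝ) (X : V → Finset (Sym2 V)) : Prop :=
  ∀ i j, Envies v X i j → ∀ e ∈ X j,
    v i ((X j).erase e) ≤ v i (X j) → v i ((X j).erase e) ≤ v i (X i)

/-- EFX condition on the envious agent's own bundle, removing an item whose removal
*strictly* increases the value (subscript `-`). -/
def CondOwnStrict (v : V → Finset (Sym2 V) → ℝ) (X : V → Finset (Sym2 V)) : Prop :=
  ∀ i j, Envies v X i j → ∀ e ∈ X i,
    v i (X i) < v i ((X i).erase e) → v i (X j) ≤ v i ((X i).erase e)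

/-- EFX condition on the envious agent's own bundle, removing an item whose removal
weakly increases the value (subscript `0`). -/
def CondOwnWeak (v : V → Finset (Sym2 V) → ℝ) (X : V → Finset (Sym2 V)) : Prop :=
  ∀ i j, Envies v X i j → ∀ e ∈ X i,
    v i (X i) ≤ v i ((X i).erase e) → v i (X j) ≤ v i ((X i).erase e)

/-!
Give every edge to an agent who likes it most: to one for whom it is a good if there is one, else
to one for whom it is not a chore if there is one, else to anybody. Fix two agents `i ≠ j`. An edge
held by `j` that is a good for `i` is a good for `j` too, so it is incident to both; an edge held by
`i` that is a chore for `i` is a chore for everybody, so it is again incident to both. Hence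
`s(i, j)` is the only edge that can make the bundle of `j` attractive, or that of `i` unattractive,
to `i`: with this edge removed from both bundles, agent `i` values the bundle of `j` at most as much
as the empty set, and that of `i` at least as much. An item whose removal is tested by either EFX
condition must be `s(i, j)`, and only one of the two bundles contains it.
-/

theorem apply_empty_le_of_le_insert {α β : Type*} [DecidableEq α] [Preorder β]
    {f : Finset α → β} {M S : Finset α} (hS : S ⊆ M)
    (hf : ∀ a ∈ S, ∀ T ⊆ M.erase a, f T ≤ f (insert a T)) : f ∅ ≤ f S := by
  induction S using Finset.induction_on with
  | empty => exact le_rfl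
  | insert a S ha ih =>
    obtain ⟨-, hSM⟩ := insert_subset_iff.1 hS
    calc
      f ∅ ≤ f S := ih hSM fun b hb => hf b (mem_insert_of_mem hb)
      _ ≤ f (insert a S) := hf a (mem_insert_self a S) S (subset_erase.2 ⟨hSM, ha⟩)

theorem apply_le_empty_of_insert_le {α β : Type*} [DecidableEq α] [Preorder β]
    {f : Finset α → β} {M S : Finset α} (hS : S ⊆ M)
    (hf : ∀ a ∈ S, ∀ T ⊆ M.erase a, f (insert a T) ≤ f T) : f S ≤ f ∅ :=
  apply_empty_le_of_le_insert (β := βᵒᵈ) hS hf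

section Items

variable {u : Finset (Sym2 V) → ℝ} {M S : Finset (Sym2 V)} {e : Sym2 V}

theorem IsGoodFor.not_isChoreFor (h : IsGoodFor u M e) : ¬ IsChoreFor u M e := fun h' =>
  lt_asymm (h ∅ (empty_subset _)) (h' ∅ (empty_subset _))

theorem IsDummyFor.not_isGoodFor (h : IsDummyFor u M e) : ¬ IsGoodFor u M e := fun h' =>
  (h' ∅ (empty_subset _)).ne' (h ∅ (empty_subset _))

theorem IsDummyFor.not_isChoreFor (h : IsDummyFor u M e) : ¬ IsChoreFor u M e := fun h' =>
  (h' ∅ (empty_subset _)).ne (h ∅ (empty_subset _))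

theorem apply_insert_le_of_not_isGoodFor
    (h : IsGoodFor u M e ∨ IsChoreFor u M e ∨ IsDummyFor u M e) (he : ¬ IsGoodFor u M e)
    (hS : S ⊆ M.erase e) : u (insert e S) ≤ u S := by
  rcases h with hgood | hchore | hdummy
  · exact absurd hgood he
  · exact (hchore S hS).le
  · exact (hdummy S hS).le

theorem apply_le_insert_of_not_isChoreFor
    (h : IsGoodFor u M e ∨ IsChoreFor u M e ∨ IsDummyFor u M e) (he : ¬ IsChoreFor u M e)
    (hS : S ⊆ M.erase e) : u S ≤ u (insert e S) := by
  rcases h with hgood | hchore | hdummy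
  · exact (hgood S hS).le
  · exact absurd hchore he
  · exact (hdummy S hS).ge

theorem isGoodFor_of_apply_erase_lt
    (h : IsGoodFor u M e ∨ IsChoreFor u M e ∨ IsDummyFor u M e) (hS : S ⊆ M) (he : e ∈ S)
    (hlt : u (S.erase e) < u S) : IsGoodFor u M e := by
  by_contra hgood
  have hle := apply_insert_le_of_not_isGoodFor h hgood (erase_subset_erase e hS)
  rw [insert_erase he] at hle
  exact hlt.not_ge hle

theorem isChoreFor_of_apply_lt_erase
    (h : IsGoodFor u M e ∨ IsChoreFor u M e ∨ IsDummyFor u M e) (hS : S ⊆ M) (he : e ∈ S)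
    (hlt : u S < u (S.erase e)) : IsChoreFor u M e := by
  by_contra hchore
  have hle := apply_le_insert_of_not_isChoreFor h hchore (erase_subset_erase e hS)
  rw [insert_erase he] at hle
  exact hlt.not_ge hle

end Items

/-- A mixed instance on a graph that may have loops: every edge is a good, a chore or a dummy for
every agent, and it is a dummy for the agents it is not incident to. A loop is thus relevant to a
single agent. -/
structure LoopyInstance (M : Finset (Sym2 V)) (v : V → Finset (Sym2 V) → ℝ) : Prop where
  trichotomy : ∀ i, ∀ e ∈ M, IsGoodFor (v i) M e ∨ IsChoreFor (v i) M e ∨ IsDummyFor (v i) M e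
  isDummyFor_of_notMem : ∀ i, ∀ e ∈ M, i ∉ e → IsDummyFor (v i) M e

/-- The bundles `X` are *greedy* if nobody likes an edge more than its holder, where a good is
liked more than a dummy and a dummy more than a chore. Encoded by two implications, this makes
sense without assuming that every edge is of one of the three kinds. -/
def IsGreedy (M : Finset (Sym2 V)) (v : V → Finset (Sym2 V) → ℝ) (X : V → Finset (Sym2 V)) :
    Prop :=
  ∀ i, ∀ e ∈ X i, ∀ j,
    (IsGoodFor (v j) M e → IsGoodFor (v i) M e) ∧ (IsChoreFor (v i) M e → IsChoreFor (v j) M e)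

section Allocations

variable {M : Finset (Sym2 V)} {v : V → Finset (Sym2 V) → ℝ} {X : V → Finset (Sym2 V)}
  {i j : V} {e : Sym2 V}

theorem LoopyInstance.mem_of_isGoodFor (h : LoopyInstance M v) (he : e ∈ M)
    (hgood : IsGoodFor (v i) M e) : i ∈ e :=
  not_imp_comm.1 (h.isDummyFor_of_notMem i e he) fun hdummy => hdummy.not_isGoodFor hgood

theorem LoopyInstance.mem_of_isChoreFor (h : LoopyInstance M v) (he : e ∈ M)
    (hchore : IsChoreFor (v i) M e) : i ∈ e :=
  not_imp_comm.1 (h.isDummyFor_of_notMem i e he) fun hdummy => hdummy.not_isChoreFor hchore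

theorem isAllocation_filter (M : Finset (Sym2 V)) (owner : Sym2 V → V) :
    IsAllocation M fun i => {e ∈ M | owner e = i} :=
  ⟨fun _ => filter_subset _ _, fun e he =>
    ⟨owner e, mem_filter.2 ⟨he, rfl⟩, fun _ hi => (mem_filter.1 hi).2.symm⟩⟩

omit [DecidableEq V] in
theorem IsAllocation.notMem_of_mem (hX : IsAllocation M X) (hij : i ≠ j) (he : e ∈ X i) :
    e ∉ X j := fun he' =>
  hij ((hX.2 e (hX.1 i he)).unique he he')

theorem exists_agent_liking_most (M : Finset (Sym2 V)) (v : V → Finset (Sym2 V) → ℝ)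
    (e : Sym2 V) :
    ∃ i, ∀ j, (IsGoodFor (v j) M e → IsGoodFor (v i) M e) ∧
      (IsChoreFor (v i) M e → IsChoreFor (v j) M e) := by
  by_cases hgood : ∃ i, IsGoodFor (v i) M e
  · obtain ⟨i, hi⟩ := hgood
    exact ⟨i, fun _ => ⟨fun _ => hi, fun hchore => absurd hchore hi.not_isChoreFor⟩⟩
  push Not at hgood
  by_cases hchore : ∃ i, ¬ IsChoreFor (v i) M e
  · obtain ⟨i, hi⟩ := hchore
    exact ⟨i, fun j => ⟨fun hj => absurd hj (hgood j), fun h => absurd h hi⟩⟩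
  push Not at hchore
  exact ⟨(Quot.out e).1, fun j => ⟨fun hj => absurd hj (hgood j), fun _ => hchore j⟩⟩

theorem exists_isAllocation_isGreedy (M : Finset (Sym2 V)) (v : V → Finset (Sym2 V) → ℝ) :
    ∃ X, IsAllocation M X ∧ IsGreedy M v X := by
  choose owner howner using exists_agent_liking_most M v
  refine ⟨_, isAllocation_filter M owner, fun i e he => ?_⟩
  obtain ⟨-, rfl⟩ := mem_filter.1 he
  exact howner e

namespace IsGreedy

theorem eq_mk_of_isGoodFor (hG : IsGreedy M v X) (h : LoopyInstance M v) (hX : IsAllocation M X)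
    (hij : i ≠ j) (he : e ∈ X j) (hgood : IsGoodFor (v i) M e) : e = s(i, j) :=
  have heM : e ∈ M := hX.1 j he
  have hgood' : IsGoodFor (v j) M e := (hG j e he i).1 hgood
  (Sym2.mem_and_mem_iff hij).1 ⟨h.mem_of_isGoodFor heM hgood, h.mem_of_isGoodFor heM hgood'⟩

theorem eq_mk_of_isChoreFor (hG : IsGreedy M v X) (h : LoopyInstance M v) (hX : IsAllocation M X)
    (hij : i ≠ j) (he : e ∈ X i) (hchore : IsChoreFor (v i) M e) : e = s(i, j) :=
  have heM : e ∈ M := hX.1 i he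
  have hchore' : IsChoreFor (v j) M e := (hG i e he j).2 hchore
  (Sym2.mem_and_mem_iff hij).1 ⟨h.mem_of_isChoreFor heM hchore, h.mem_of_isChoreFor heM hchore'⟩

theorem apply_erase_mk_le_empty (hG : IsGreedy M v X) (h : LoopyInstance M v)
    (hX : IsAllocation M X) (hij : i ≠ j) : v i ((X j).erase s(i, j)) ≤ v i ∅ := by
  refine apply_le_empty_of_insert_le ((erase_subset _ _).trans (hX.1 j)) fun e he T hT => ?_
  obtain ⟨hne, he⟩ := mem_erase.1 he
  have hgood : ¬ IsGoodFor (v i) M e := mt (hG.eq_mk_of_isGoodFor h hX hij he) hne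
  exact apply_insert_le_of_not_isGoodFor (h.trichotomy i e (hX.1 j he)) hgood hT

theorem apply_empty_le_erase_mk (hG : IsGreedy M v X) (h : LoopyInstance M v)
    (hX : IsAllocation M X) (hij : i ≠ j) : v i ∅ ≤ v i ((X i).erase s(i, j)) := by
  refine apply_empty_le_of_le_insert ((erase_subset _ _).trans (hX.1 i)) fun e he T hT => ?_
  obtain ⟨hne, he⟩ := mem_erase.1 he
  have hchore : ¬ IsChoreFor (v i) M e := mt (hG.eq_mk_of_isChoreFor h hX hij he) hne
  exact apply_le_insert_of_not_isChoreFor (h.trichotomy i e (hX.1 i he)) hchore hT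

theorem apply_erase_mk_le_erase_mk (hG : IsGreedy M v X) (h : LoopyInstance M v)
    (hX : IsAllocation M X) (hij : i ≠ j) :
    v i ((X j).erase s(i, j)) ≤ v i ((X i).erase s(i, j)) :=
  (hG.apply_erase_mk_le_empty h hX hij).trans (hG.apply_empty_le_erase_mk h hX hij)

theorem condEnviedStrict (hG : IsGreedy M v X) (h : LoopyInstance M v) (hX : IsAllocation M X) :
    CondEnviedStrict v X := by
  intro i j henvy e he hlt
  have hij : i ≠ j := ne_of_apply_ne (fun k => v i (X k)) henvy.ne
  have hgood := isGoodFor_of_apply_erase_lt (h.trichotomy i e (hX.1 j he)) (hX.1 j) he hlt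
  obtain rfl : e = s(i, j) := hG.eq_mk_of_isGoodFor h hX hij he hgood
  simpa only [erase_eq_of_notMem (hX.notMem_of_mem hij.symm he)]
    using hG.apply_erase_mk_le_erase_mk h hX hij

theorem condOwnStrict (hG : IsGreedy M v X) (h : LoopyInstance M v) (hX : IsAllocation M X) :
    CondOwnStrict v X := by
  intro i j henvy e he hlt
  have hij : i ≠ j := ne_of_apply_ne (fun k => v i (X k)) henvy.ne
  have hchore := isChoreFor_of_apply_lt_erase (h.trichotomy i e (hX.1 i he)) (hX.1 i) he hlt
  obtain rfl : e = s(i, j) := hG.eq_mk_of_isChoreFor h hX hij he hchore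
  simpa only [erase_eq_of_notMem (hX.notMem_of_mem hij he)]
    using hG.apply_erase_mk_le_erase_mk h hX hij

end IsGreedy

end Allocations

theorem stmt12_general {V : Type*} [DecidableEq V] {M : Finset (Sym2 V)}
    {v : V → Finset (Sym2 V) → ℝ} (h : LoopyInstance M v) :
    ∃ X : V → Finset (Sym2 V),
      IsAllocation M X ∧ CondEnviedStrict v X ∧ CondOwnStrict v X := by
  obtain ⟨X, hX, hG⟩ := exists_isAllocation_isGreedy M v
  exact ⟨X, hX, hG.condEnviedStrict h hX, hG.condOwnStrict h hX⟩

/-- For every mixed instance on a simple graph, an EFX⁺₋ allocation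
always exists. -/
theorem stmt12 {V : Type*} [Fintype V] [DecidableEq V]
    (M : Finset (Sym2 V)) (v : V → Finset (Sym2 V) → ℝ)
    (hvalid : ValidInstance M v) :
    ∃ X : V → Finset (Sym2 V),
      IsAllocation M X ∧ CondEnviedStrict v X ∧ CondOwnStrict v X := by
  exact stmt12_general ⟨hvalid.2.1, hvalid.2.2⟩
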